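/- For every nonnegative integer n, there exist integers x, y, z with z odd such that 120n + 77 = 5x² + 5y² + 3z². -/

import Mathlib

/-!
By Hermite reduction, `u² + v² + vw + w²` is up to equivalence the only positive ternary form of
half-discriminant `3`. If `3 ∤ N`, Dirichlet's theorem supplies a prime `p = 4Nq - 3` with
`q ≡ 1 (mod 12)`; quadratic reciprocity makes `-q` a square modulo `p`, which is what is needed to
write down a form of half-discriminant `3` whose last coefficient is `N`. Hence
`N = u² + v² + vw + w²`, and therefore `N = a² + b² + 3z²`.

The norm form `a² + 3z²` of `ℤ[√-3]` is invariant under multiplication by the sixth roots of unity,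
which acts on odd `a`, `z` by half-integral substitutions `z ↦ (a ± z) / 2`. When `N ≡ 5 (mod 8)`
and `N` is not a square modulo `5`, these moves lead to an odd `z` with `z² ≡ 2N (mod 5)`. Then
`5 ∣ a² + b²`, and the factor `5 = 1² + 2²` can be divided out.
-/

open scoped NumberTheorySymbols

/-- The integral ternary quadratic form `ax² + by² + cz² + ryz + sxz + txy`. The cross coefficients
are not required to be even. -/
structure TernaryForm where
  (a b c r s t : ℤ)

namespace TernaryForm

/-- The value of a ternary form at `(x, y, z)`. -/
def eval (f : TernaryForm) (x y z : ℤ) : ℤ :=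
  f.a * x ^ 2 + f.b * y ^ 2 + f.c * z ^ 2 + f.r * y * z + f.s * x * z + f.t * x * y

/-- The form `f` represents `N`, possibly imprimitively. -/
def Represents (f : TernaryForm) (N : ℤ) : Prop :=
  ∃ x y z, f.eval x y z = N

/-- The half-discriminant: half the determinant of the Hessian
`[[2a, t, s], [t, 2b, r], [s, r, 2c]]`. -/
def disc (f : TernaryForm) : ℤ :=
  4 * f.a * f.b * f.c + f.r * f.s * f.t - f.a * f.r ^ 2 - f.b * f.s ^ 2 - f.c * f.t ^ 2

/-- The principal minor of the Hessian in the variables `x`, `y`. -/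
def minorXY (f : TernaryForm) : ℤ :=
  4 * f.a * f.b - f.t ^ 2

/-- The principal minor of the Hessian in the variables `x`, `z`. -/
def minorXZ (f : TernaryForm) : ℤ :=
  4 * f.a * f.c - f.s ^ 2

/-- The minor of the Hessian with rows `x`, `y` and columns `x`, `z`. Completing the square in `x`
turns `4af` into a square plus the binary form
`minorXY * y² + 2 * mixedMinor * y * z + minorXZ * z²`. -/
def mixedMinor (f : TernaryForm) : ℤ :=
  2 * f.a * f.r - f.s * f.t

/-- Positive definiteness, expressed by Sylvester's criterion. -/
structure IsPos (f : TernaryForm) : Prop where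
  a_pos : 0 < f.a
  minorXY_pos : 0 < f.minorXY
  disc_pos : 0 < f.disc

/-- The form obtained by exchanging `x` and `y`. -/
def swapXY (f : TernaryForm) : TernaryForm :=
  ⟨f.b, f.a, f.c, f.s, f.r, f.t⟩

/-- The form obtained by exchanging `y` and `z`. -/
def swapYZ (f : TernaryForm) : TernaryForm :=
  ⟨f.a, f.c, f.b, f.r, f.t, f.s⟩

/-- The form obtained by the unipotent substitution `x ↦ x + iy + jz`, `y ↦ y + kz`. -/
def shear (f : TernaryForm) (i j k : ℤ) : TernaryForm where
  a := f.a
  b := f.b + f.a * i ^ 2 + f.t * i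
  c := f.c + f.a * j ^ 2 + f.b * k ^ 2 + f.r * k + f.s * j + f.t * j * k
  r := f.r + 2 * f.a * i * j + 2 * f.b * k + f.s * i + f.t * (i * k + j)
  s := f.s + 2 * f.a * j + f.t * k
  t := f.t + 2 * f.a * i

/-- Equivalence of ternary forms under `GL₃(ℤ)`, given by generators: the exchanges of variables and
the unipotent substitutions generate this group. -/
inductive Equivalent (f : TernaryForm) : TernaryForm → Prop
  | refl : Equivalent f f
  | swapXY {g : TernaryForm} : Equivalent f g → Equivalent f g.swapXY
  | swapYZ {g : TernaryForm} : Equivalent f g → Equivalent f g.swapYZ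
  | shear {g : TernaryForm} (i j k : ℤ) : Equivalent f g → Equivalent f (g.shear i j k)

variable {f g : TernaryForm}

theorem minorXY_mul_minorXZ (f : TernaryForm) :
    f.minorXY * f.minorXZ = 4 * f.a * f.disc + f.mixedMinor ^ 2 := by
  simp only [minorXY, minorXZ, mixedMinor, disc]
  ring

theorem IsPos.b_pos (hf : f.IsPos) : 0 < f.b := by
  have h : 0 < 4 * f.a * f.b := by
    have := hf.minorXY_pos
    unfold minorXY at this
    linarith [sq_nonneg f.t]
  exact pos_of_mul_pos_right h (mul_pos four_pos hf.a_pos).le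

theorem IsPos.minorXZ_pos (hf : f.IsPos) : 0 < f.minorXZ := by
  have h : 0 < f.minorXY * f.minorXZ := by
    have := hf.a_pos
    have := hf.disc_pos
    rw [minorXY_mul_minorXZ]
    positivity
  exact pos_of_mul_pos_right h hf.minorXY_pos.le

theorem a_swapXY (f : TernaryForm) : f.swapXY.a = f.b := rfl

theorem a_shear (f : TernaryForm) (i j k : ℤ) : (f.shear i j k).a = f.a := rfl

theorem minorXY_swapXY (f : TernaryForm) : f.swapXY.minorXY = f.minorXY := by
  simp only [minorXY, swapXY]
  ring

theorem minorXY_shear (f : TernaryForm) (i j k : ℤ) : (f.shear i j k).minorXY = f.minorXY := by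
  simp only [minorXY, shear]
  ring

theorem mixedMinor_shear (f : TernaryForm) (i j k : ℤ) :
    (f.shear i j k).mixedMinor = f.mixedMinor + k * f.minorXY := by
  simp only [mixedMinor, minorXY, shear]
  ring

namespace Equivalent

theorem disc_eq (h : f.Equivalent g) : g.disc = f.disc := by
  induction h with
  | refl => rfl
  | swapXY _ ih | swapYZ _ ih | shear i j k _ ih =>
    rw [← ih]
    simp only [disc, TernaryForm.swapXY, TernaryForm.swapYZ, TernaryForm.shear]
    ring

theorem isPos (h : f.Equivalent g) (hf : f.IsPos) : g.IsPos := by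
  have disc_pos {g' : TernaryForm} (h' : f.Equivalent g') : 0 < g'.disc :=
    h'.disc_eq ▸ hf.disc_pos
  induction h with
  | refl => exact hf
  | swapXY h ih => exact ⟨ih.b_pos, (minorXY_swapXY _).symm ▸ ih.minorXY_pos, disc_pos h.swapXY⟩
  | swapYZ h ih => exact ⟨ih.a_pos, ih.minorXZ_pos, disc_pos h.swapYZ⟩
  | shear i j k h ih =>
    exact ⟨ih.a_pos, (minorXY_shear _ i j k).symm ▸ ih.minorXY_pos, disc_pos (h.shear i j k)⟩

theorem represents (h : f.Equivalent g) {N : ℤ} (hf : f.Represents N) : g.Represents N := by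
  induction h with
  | refl => exact hf
  | swapXY _ ih =>
    obtain ⟨x, y, z, rfl⟩ := ih
    refine ⟨y, x, z, ?_⟩
    simp only [eval, TernaryForm.swapXY]
    ring
  | swapYZ _ ih =>
    obtain ⟨x, y, z, rfl⟩ := ih
    refine ⟨x, z, y, ?_⟩
    simp only [eval, TernaryForm.swapYZ]
    ring
  | shear i j k _ ih =>
    obtain ⟨x, y, z, rfl⟩ := ih
    refine ⟨x - i * (y - k * z) - j * z, y - k * z, z, ?_⟩
    simp only [eval, TernaryForm.shear]
    ring

end Equivalent

/-- The normalization that unipotent substitutions can achieve. The intervals are half-open so that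
no sign ambiguity is left in the reduced form. -/
structure IsSizeReduced (f : TernaryForm) : Prop where
  t_mem : f.t ∈ Set.Ioc (-f.a) f.a
  s_mem : f.s ∈ Set.Ioc (-f.a) f.a
  two_mul_mixedMinor_mem : 2 * f.mixedMinor ∈ Set.Ioc (-f.minorXY) f.minorXY

/-- Hermite reduction: size reduction, together with the minimality conditions that the exchanges of
variables can achieve. -/
structure IsReduced (f : TernaryForm) : Prop extends f.IsSizeReduced where
  a_le_b : f.a ≤ f.b
  minorXY_le_minorXZ : f.minorXY ≤ f.minorXZ

theorem exists_shear_isSizeReduced (ha : 0 < f.a) (hA : 0 < f.minorXY) :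
    ∃ i j k, (f.shear i j k).IsSizeReduced := by
  have exists_mem_Ioc {m : ℤ} (hm : 0 < m) (x : ℤ) : ∃ k, x + k * (2 * m) ∈ Set.Ioc (-m) m := by
    obtain ⟨k, hk, -⟩ := existsUnique_add_zsmul_mem_Ioc (mul_pos two_pos hm) x (-m)
    rw [show -m + 2 * m = m by ring, smul_eq_mul] at hk
    exact ⟨k, hk⟩
  obtain ⟨i, hi⟩ := exists_mem_Ioc ha f.t
  obtain ⟨k, hk⟩ := exists_mem_Ioc hA (2 * f.mixedMinor)
  obtain ⟨j, hj⟩ := exists_mem_Ioc ha (f.s + f.t * k)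
  have ht : (f.shear i j k).t = f.t + i * (2 * f.a) := by
    simp only [shear]
    ring
  have hs : (f.shear i j k).s = f.s + f.t * k + j * (2 * f.a) := by
    simp only [shear]
    ring
  have hB : 2 * (f.shear i j k).mixedMinor = 2 * f.mixedMinor + k * (2 * f.minorXY) := by
    rw [mixedMinor_shear]
    ring
  exact ⟨i, j, k, ht ▸ hi, hs ▸ hj, by rwa [hB, minorXY_shear]⟩

theorem IsPos.exists_equivalent_isReduced (hf : f.IsPos) : ∃ g, f.Equivalent g ∧ g.IsReduced := by
  let size (g : TernaryForm) : ℕ ×ₗ ℕ := toLex (g.a.toNat, g.minorXY.toNat)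
  obtain ⟨g, hfg, hmin⟩ := (InvImage.wf size wellFounded_lt).has_min {g | f.Equivalent g} ⟨f, .refl⟩
  have hg := hfg.isPos hf
  obtain ⟨i, j, k, hsize⟩ := exists_shear_isSizeReduced hg.a_pos hg.minorXY_pos
  set h := g.shear i j k with h_def
  have hfh : f.Equivalent h := hfg.shear i j k
  have hh := hfh.isPos hf
  have h_min {h' : TernaryForm} (hfh' : f.Equivalent h') : size h ≤ size h' := by
    have : size h = size g := by
      simp only [size, h_def, minorXY_shear, a_shear]
    exact this ▸ not_lt.mp (hmin h' hfh')
  refine ⟨h, hfh, hsize, ?_, ?_⟩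
  · have := h_min hfh.swapXY
    simp only [size, minorXY_swapXY, a_swapXY, Prod.Lex.toLex_le_toLex] at this
    have := hh.b_pos
    omega
  · have := h_min hfh.swapYZ
    rw [show size h.swapYZ = toLex (h.a.toNat, h.minorXZ.toNat) from rfl] at this
    simp only [size, Prod.Lex.toLex_le_toLex, lt_irrefl, true_and, false_or] at this
    have := hh.minorXZ_pos
    omega

namespace IsReduced

theorem three_mul_a_sq_le (hf : f.IsReduced) (ha : 0 < f.a) : 3 * f.a ^ 2 ≤ f.minorXY := by
  have ht : f.t ^ 2 ≤ f.a ^ 2 := sq_le_sq' hf.t_mem.1.le hf.t_mem.2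
  have hab : f.a * f.a ≤ f.a * f.b := mul_le_mul_of_nonneg_left hf.a_le_b ha.le
  unfold minorXY
  linarith

theorem three_mul_minorXY_sq_le (hf : f.IsReduced) (hA : 0 < f.minorXY) :
    3 * f.minorXY ^ 2 ≤ 16 * f.a * f.disc := by
  have hB : (2 * f.mixedMinor) ^ 2 ≤ f.minorXY ^ 2 :=
    sq_le_sq' hf.two_mul_mixedMinor_mem.1.le hf.two_mul_mixedMinor_mem.2
  have hA' : f.minorXY * f.minorXY ≤ f.minorXY * f.minorXZ :=
    mul_le_mul_of_nonneg_left hf.minorXY_le_minorXZ hA.le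
  rw [minorXY_mul_minorXZ] at hA'
  linarith

theorem twentySeven_mul_a_pow_three_le (hf : f.IsReduced) (hpos : f.IsPos) :
    27 * f.a ^ 3 ≤ 16 * f.disc := by
  have ha := hpos.a_pos
  have h : f.a * (27 * f.a ^ 3) ≤ f.a * (16 * f.disc) := calc
    f.a * (27 * f.a ^ 3) = 3 * (3 * f.a ^ 2) ^ 2 := by ring
    _ ≤ 3 * f.minorXY ^ 2 := by gcongr; exact hf.three_mul_a_sq_le ha
    _ ≤ 16 * f.a * f.disc := hf.three_mul_minorXY_sq_le hpos.minorXY_pos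
    _ = f.a * (16 * f.disc) := by ring
  exact le_of_mul_le_mul_left h ha

theorem a_eq_one_and_b_eq_one (hf : f.IsReduced) (hpos : f.IsPos) (hdisc : f.disc = 3) :
    f.a = 1 ∧ f.b = 1 := by
  have ha : f.a = 1 := by
    have hle := hf.twentySeven_mul_a_pow_three_le hpos
    have h0 := hpos.a_pos
    by_contra hne
    have : 2 ^ 3 ≤ f.a ^ 3 := pow_le_pow_left₀ two_pos.le (by omega) 3
    omega
  have hA : f.minorXY ≤ 4 := by
    have := hf.three_mul_minorXY_sq_le hpos.minorXY_pos
    rw [ha, hdisc] at this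
    exact abs_le_of_sq_le_sq' (by linarith) four_pos.le |>.2
  have ht : f.t ^ 2 ≤ 1 ^ 2 := sq_le_sq' (ha ▸ hf.t_mem.1.le) (ha ▸ hf.t_mem.2)
  have := hpos.b_pos
  rw [minorXY, ha] at hA
  exact ⟨ha, by omega⟩

theorem eq_of_disc_eq_three (hf : f.IsReduced) (hpos : f.IsPos) (hdisc : f.disc = 3) :
    f = ⟨1, 1, 1, 1, 0, 0⟩ ∨ f = ⟨1, 1, 1, 0, 1, 0⟩ ∨ f = ⟨1, 1, 1, 0, 0, 1⟩ := by
  obtain ⟨ha, hb⟩ := hf.a_eq_one_and_b_eq_one hpos hdisc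
  obtain ⟨a, b, c, r, s, t⟩ := f
  obtain rfl : a = 1 := ha
  obtain rfl : b = 1 := hb
  obtain ⟨⟨⟨ht₀, ht₁⟩, ⟨hs₀, hs₁⟩, ⟨hB₀, hB₁⟩⟩, -, -⟩ := hf
  simp only [disc, minorXY, mixedMinor, mk.injEq, true_and] at *
  have ht : t = 0 ∨ t = 1 := by omega
  have hs : s = 0 ∨ s = 1 := by omega
  have hr : r = 0 ∨ r = 1 := by rcases ht with rfl | rfl <;> omega
  rcases ht with rfl | rfl <;> rcases hs with rfl | rfl <;> rcases hr with rfl | rfl <;> omega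

end IsReduced

theorem IsPos.equivalent_of_disc_eq_three (hf : f.IsPos) (hdisc : f.disc = 3) :
    f.Equivalent ⟨1, 1, 1, 1, 0, 0⟩ := by
  obtain ⟨g, hfg, hg⟩ := hf.exists_equivalent_isReduced
  obtain rfl | rfl | rfl := hg.eq_of_disc_eq_three (hfg.isPos hf) (hfg.disc_eq.trans hdisc)
  · exact hfg
  · exact hfg.swapXY
  · exact hfg.swapYZ.swapXY

theorem exists_isPos_represents_of_dvd {N p q d τ : ℤ} (hp : 0 < p) (hq : 0 < q) (hd : 0 < d)
    (hpq : p + d = 4 * N * q) (hdvd : p ∣ τ ^ 2 + q) :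
    ∃ f : TernaryForm, f.IsPos ∧ f.disc = d ∧ f.Represents N := by
  obtain ⟨a, ha⟩ := hdvd
  let f : TernaryForm := ⟨a, p, N, 0, 1, 2 * τ⟩
  have hdisc : f.disc = d := by
    simp only [disc, f]
    linear_combination -hpq - 4 * N * ha
  have hA : f.minorXY = 4 * q := by
    simp only [minorXY, f]
    linear_combination -4 * ha
  have ha_pos : 0 < a := pos_of_mul_pos_right (ha ▸ by positivity : 0 < p * a) hp.le
  refine ⟨f, ⟨ha_pos, by omega, by omega⟩, hdisc, 0, 0, 1, ?_⟩
  simp only [eval, f]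
  ring

end TernaryForm

theorem jacobiSym_neg_three_left {q : ℕ} (hq : Odd q) : J(-3 | q) = J(q | 3) := by
  have h3 : J(-3 | q) = ZMod.χ₄ q * J((3 : ℕ) | q) := by
    rw [show (-3 : ℤ) = -1 * (3 : ℕ) by rfl, jacobiSym.mul_left, jacobiSym.at_neg_one hq]
  obtain h | h := Nat.odd_mod_four_iff.mp (Nat.odd_iff.mp hq)
  · rw [h3, ZMod.χ₄_nat_one_mod_four h, one_mul,
      jacobiSym.quadratic_reciprocity_one_mod_four' (by decide) h]
  · rw [h3, ZMod.χ₄_nat_three_mod_four h,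
      jacobiSym.quadratic_reciprocity_three_mod_four (by decide) h, neg_one_mul, neg_neg]

theorem jacobiSym_neg_left_of_one_mod_four {p q : ℕ} (hp : p % 4 = 1) (hq : Odd q) :
    J(-q | p) = J(p | q) := by
  have hp_odd : Odd p := Nat.odd_iff.mpr (Nat.odd_of_mod_four_eq_one hp)
  rw [neg_eq_neg_one_mul, jacobiSym.mul_left, jacobiSym.at_neg_one hp_odd,
    ZMod.χ₄_nat_one_mod_four hp, one_mul, jacobiSym.quadratic_reciprocity_one_mod_four' hq hp]

theorem isCoprime_four_mul_sub_three {R : Type*} [CommRing R] {N : R} (hN : IsCoprime N 3) :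
    IsCoprime (4 * N - 3) (48 * N) := by
  obtain ⟨u, v, huv⟩ := hN
  have h2 : IsCoprime (4 * N - 3) 2 := ⟨1, 2 - 2 * N, by ring⟩
  have h3 : IsCoprime (4 * N - 3) 3 := ⟨u, u + 4 * v - 1, by linear_combination 4 * huv⟩
  have hN : IsCoprime (4 * N - 3) N := ⟨-v, u + 4 * v, by linear_combination huv⟩
  rw [show 48 * N = 2 ^ 4 * 3 * N by ring]
  exact (h2.pow_right.mul_right h3).mul_right hN

theorem exists_prime_add_three_eq {N : ℕ} (hN : ¬3 ∣ N) :
    ∃ p q : ℕ, p.Prime ∧ q % 12 = 1 ∧ p + 3 = 4 * N * q := by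
  have hcop : IsCoprime (4 * N - 3 : ℤ) (48 * N : ℕ) := by
    have : IsCoprime (N : ℤ) (3 : ℕ) :=
      Nat.isCoprime_iff_coprime.mpr ((Nat.prime_three.coprime_iff_not_dvd.mpr hN).symm)
    exact_mod_cast isCoprime_four_mul_sub_three this
  obtain ⟨p, -, hp, hmod⟩ := Nat.forall_exists_prime_gt_and_zmodEq 0 (by omega) hcop
  obtain ⟨k, hk⟩ := hmod.symm.dvd
  push_cast at hk
  have hpk : (p : ℤ) + 3 = 4 * N * (12 * k + 1) := by linear_combination hk
  have hk_nonneg : 0 ≤ k := by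
    have hpos : 0 < 4 * (N : ℤ) * (12 * k + 1) := by
      rw [← hpk]
      positivity
    have := pos_of_mul_pos_right hpos (by positivity)
    omega
  lift k to ℕ using hk_nonneg
  exact ⟨p, 12 * k + 1, hp, by omega, by exact_mod_cast hpk⟩

theorem exists_dvd_sq_add {N p q : ℕ} (hp : p.Prime) (hq : q % 12 = 1) (hpq : p + 3 = 4 * N * q) :
    ∃ τ : ℤ, (p : ℤ) ∣ τ ^ 2 + q := by
  have : Fact p.Prime := ⟨hp⟩
  have hp4 : p % 4 = 1 := by
    rw [mul_assoc] at hpq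
    omega
  have hq_odd : Odd q := Nat.odd_iff.mpr (by omega)
  have hpq_mod : p ≡ -3 [ZMOD q] := by
    zify at hpq
    exact Int.modEq_iff_dvd.mpr ⟨-(4 * N), by linear_combination -hpq⟩
  have hJ : J(-q | p) = 1 := calc
    J(-q | p) = J(p | q) := jacobiSym_neg_left_of_one_mod_four hp4 hq_odd
    _ = J(-3 | q) := jacobiSym.mod_left' hpq_mod
    _ = J(q | 3) := jacobiSym_neg_three_left hq_odd
    _ = J(1 | 3) := jacobiSym.mod_left' (by omega)
    _ = 1 := jacobiSym.one_left 3
  obtain ⟨y, hy⟩ := ZMod.isSquare_of_jacobiSym_eq_one hJ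
  obtain ⟨τ, rfl⟩ := ZMod.intCast_surjective y
  refine ⟨τ, (ZMod.intCast_zmod_eq_zero_iff_dvd _ p).mp ?_⟩
  push_cast at hy ⊢
  linear_combination -hy

theorem exists_eq_sq_add_sq_add_mul_add_sq {N : ℕ} (hN : ¬3 ∣ N) :
    ∃ u v w : ℤ, N = u ^ 2 + (v ^ 2 + v * w + w ^ 2) := by
  obtain ⟨p, q, hp, hq, hpq⟩ := exists_prime_add_three_eq hN
  obtain ⟨τ, hτ⟩ := exists_dvd_sq_add hp hq hpq
  have hp_pos : (0 : ℤ) < p := by exact_mod_cast hp.pos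
  obtain ⟨f, hf, hdisc, hfN⟩ := TernaryForm.exists_isPos_represents_of_dvd (N := N) hp_pos
    (by omega) three_pos (by exact_mod_cast hpq) hτ
  obtain ⟨u, v, w, h⟩ := (hf.equivalent_of_disc_eq_three hdisc).represents hfN
  exact ⟨u, v, w, by simp only [← h, TernaryForm.eval]; ring⟩

theorem exists_sq_add_mul_add_sq_eq (v w : ℤ) :
    ∃ b z : ℤ, v ^ 2 + v * w + w ^ 2 = b ^ 2 + 3 * z ^ 2 := by
  obtain ⟨k, rfl | rfl⟩ := Int.even_or_odd' v
  · exact ⟨w + k, k, by ring⟩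
  · obtain ⟨l, rfl | rfl⟩ := Int.even_or_odd' w
    · exact ⟨2 * k + 1 + l, l, by ring⟩
    · exact ⟨k - l, k + l + 1, by ring⟩

theorem exists_eq_sq_add_sq_add_three_mul_sq {N : ℕ} (hN : ¬3 ∣ N) :
    ∃ a b z : ℤ, N = a ^ 2 + b ^ 2 + 3 * z ^ 2 := by
  obtain ⟨u, v, w, h⟩ := exists_eq_sq_add_sq_add_mul_add_sq hN
  obtain ⟨b, z, hbz⟩ := exists_sq_add_mul_add_sq_eq v w
  exact ⟨u, b, z, by rw [h, hbz, add_assoc]⟩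

theorem odd_of_odd_of_eq_sq_add_sq_add_three_mul_sq {N a b z : ℤ} (hN : N % 4 = 1) (hz : Odd z)
    (h : N = a ^ 2 + b ^ 2 + 3 * z ^ 2) : Odd a ∧ Odd b := by
  have hz4 := Int.sq_mod_four_eq_one_of_odd hz
  have sq_mod_four (x : ℤ) : Even x ∧ x ^ 2 % 4 = 0 ∨ Odd x ∧ x ^ 2 % 4 = 1 := by
    obtain hx | hx := Int.even_or_odd x
    · exact .inl ⟨hx, Int.emod_eq_zero_of_dvd (pow_dvd_pow_of_dvd hx.two_dvd 2)⟩
    · exact .inr ⟨hx, Int.sq_mod_four_eq_one_of_odd hx⟩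
  obtain ⟨-, ha⟩ | ⟨ha, ha4⟩ := sq_mod_four a <;> obtain ⟨-, hb⟩ | ⟨hb, hb4⟩ := sq_mod_four b
  · omega
  · omega
  · omega
  · exact ⟨ha, hb⟩

theorem exists_odd_eq_sq_add_sq_add_three_mul_sq {N a b z : ℤ} (hN : N % 8 = 5)
    (h : N = a ^ 2 + b ^ 2 + 3 * z ^ 2) :
    ∃ a b z : ℤ, Odd a ∧ Odd b ∧ Odd z ∧ N = a ^ 2 + b ^ 2 + 3 * z ^ 2 := by
  suffices H : ∃ a b z : ℤ, Odd z ∧ N = a ^ 2 + b ^ 2 + 3 * z ^ 2 by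
    obtain ⟨a, b, z, hz, h⟩ := H
    obtain ⟨ha, hb⟩ := odd_of_odd_of_eq_sq_add_sq_add_three_mul_sq (by omega) hz h
    exact ⟨a, b, z, ha, hb, hz, h⟩
  obtain hz | hz := (Int.even_or_odd z).symm
  · exact ⟨a, b, z, hz, h⟩
  have hab : Odd (a + b) := by
    have : Odd N := Int.odd_iff.mpr (by omega)
    simpa [h, hz, parity_simps] using this
  wlog ha : Odd a generalizing a b
  · exact this (a := b) (b := a) (by rw [h]; ring) (add_comm a b ▸ hab)
      (Int.not_even_iff_odd.mp (mt (Int.odd_add.mp hab).mpr ha))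
  have hb : Even b := (Int.odd_add.mp hab).mp ha
  have ha8 := Int.eight_dvd_sq_sub_one_of_odd ha
  obtain ⟨b, rfl⟩ := hb.two_dvd
  obtain ⟨z, rfl⟩ := hz.two_dvd
  have hodd : Odd (b ^ 2 + 3 * z ^ 2) := Int.odd_iff.mpr (by ring_nf at h ⊢; omega)
  have hsub : Odd (b - z) := by
    simpa [parity_simps, show ¬Even (3 : ℤ) by decide] using hodd
  exact ⟨a, b + 3 * z, b - z, hsub, by rw [h]; ring⟩

theorem exists_odd_sq_add_three_mul_sq_eq {a z : ℤ} (ha : Odd a) (hz : Odd z) :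
    ∃ c w : ℤ, Odd w ∧ (2 * w = a + z ∨ 2 * w = a - z) ∧
      a ^ 2 + 3 * z ^ 2 = c ^ 2 + 3 * w ^ 2 := by
  obtain ⟨k, rfl⟩ := ha
  obtain ⟨l, rfl⟩ := hz
  obtain h | h := Int.even_or_odd (k + l)
  · exact ⟨k - l - (2 * l + 1), k + l + 1, h.add_one, .inl (by ring), by ring⟩
  · exact ⟨k + l + 1 + (2 * l + 1), k - l, by grind, .inr (by ring), by ring⟩

theorem exists_sq_eq_two_mul_mod_five_of_mul_eq_zero {N a b z : ℤ} (ha : Odd a) (hz : Odd z)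
    (haz : (a * z : ZMod 5) = 0) (hsq : (a ^ 2 + z ^ 2 : ZMod 5) = 3 * N)
    (h : N = a ^ 2 + b ^ 2 + 3 * z ^ 2) :
    ∃ a b z : ℤ, Odd z ∧ (z : ZMod 5) ^ 2 = 2 * N ∧ N = a ^ 2 + b ^ 2 + 3 * z ^ 2 := by
  obtain ⟨c, w, hw, hwz, hcw⟩ := exists_odd_sq_add_three_mul_sq_eq ha hz
  have h4w : (2 * w : ZMod 5) ^ 2 = 3 * N := by
    obtain hwz | hwz := hwz <;> replace hwz := congrArg (Int.cast : ℤ → ZMod 5) hwz <;>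
      push_cast at hwz <;> rw [hwz]
    · linear_combination hsq + 2 * haz
    · linear_combination hsq - 2 * haz
  have five : (5 : ZMod 5) = 0 := rfl
  exact ⟨c, b, w, hw, by linear_combination -h4w + (w ^ 2 - N) * five,
    by linear_combination h + hcw⟩

-- `z² ≡ 2N (mod 5)` is the condition that makes `a² + b² = N - 3z²` divisible by `5`.
theorem exists_sq_eq_two_mul_mod_five {N a b z : ℤ} (h5 : ¬IsSquare (N : ZMod 5))
    (ha : Odd a) (hb : Odd b) (hz : Odd z) (h : N = a ^ 2 + b ^ 2 + 3 * z ^ 2) :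
    ∃ a b z : ℤ, Odd z ∧ (z : ZMod 5) ^ 2 = 2 * N ∧ N = a ^ 2 + b ^ 2 + 3 * z ^ 2 := by
  have residues : ∀ a b z : ZMod 5, ¬IsSquare (a ^ 2 + b ^ 2 + 3 * z ^ 2) →
      z ^ 2 = 2 * (a ^ 2 + b ^ 2 + 3 * z ^ 2) ∨
      a * z = 0 ∧ a ^ 2 + z ^ 2 = 3 * (a ^ 2 + b ^ 2 + 3 * z ^ 2) ∨
      b * z = 0 ∧ b ^ 2 + z ^ 2 = 3 * (a ^ 2 + b ^ 2 + 3 * z ^ 2) := by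
    decide
  have hN : (N : ZMod 5) = a ^ 2 + b ^ 2 + 3 * z ^ 2 := by exact_mod_cast congrArg Int.cast h
  obtain hz5 | ⟨haz, hsq⟩ | ⟨hbz, hsq⟩ := residues a b z (hN ▸ h5)
  · exact ⟨a, b, z, hz, by rw [hz5, hN], h⟩
  · exact exists_sq_eq_two_mul_mod_five_of_mul_eq_zero ha hz haz (by rw [hsq, hN]) h
  · exact exists_sq_eq_two_mul_mod_five_of_mul_eq_zero hb hz hbz (by rw [hsq, hN])
      (by rw [h, add_comm (a ^ 2)])

theorem exists_eq_mul_sq_add_sq_of_dvd {R : Type*} [CommRing R] [IsDomain R] {a b c d : R}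
    (hp : Prime (c ^ 2 + d ^ 2)) (hdvd : c ^ 2 + d ^ 2 ∣ a ^ 2 + b ^ 2) :
    ∃ x y : R, a ^ 2 + b ^ 2 = (c ^ 2 + d ^ 2) * (x ^ 2 + y ^ 2) := by
  have hprod : c ^ 2 + d ^ 2 ∣ (a * d - b * c) * (a * d + b * c) := by
    have : (a * d - b * c) * (a * d + b * c) =
        (a ^ 2 + b ^ 2) * d ^ 2 - (c ^ 2 + d ^ 2) * b ^ 2 := by ring
    exact this ▸ dvd_sub (hdvd.mul_right _) (dvd_mul_right _ _)
  wlog hsub : c ^ 2 + d ^ 2 ∣ a * d - b * c generalizing b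
  · obtain ⟨x, y, hxy⟩ := this (b := -b) (by rwa [neg_sq]) (by convert hprod using 1; ring)
      (by simpa using (hp.dvd_or_dvd hprod).resolve_left hsub)
    exact ⟨x, y, by rwa [neg_sq] at hxy⟩
  have hbrahmagupta :
      (a ^ 2 + b ^ 2) * (c ^ 2 + d ^ 2) = (a * c + b * d) ^ 2 + (a * d - b * c) ^ 2 := by ring
  have hadd : c ^ 2 + d ^ 2 ∣ a * c + b * d := by
    refine hp.dvd_of_dvd_pow (n := 2) ((dvd_add_left (dvd_pow hsub two_ne_zero)).mp ?_)
    exact hbrahmagupta ▸ dvd_mul_left _ _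
  obtain ⟨x, hx⟩ := hadd
  obtain ⟨y, hy⟩ := hsub
  refine ⟨x, y, mul_right_cancel₀ hp.ne_zero ?_⟩
  rw [hbrahmagupta, hx, hy]
  ring

theorem rep_120n_add_77_general {N : ℕ} (h8 : N % 8 = 5) (h3 : ¬3 ∣ N)
    (h5 : ¬IsSquare (N : ZMod 5)) :
    ∃ x y z : ℤ, Odd z ∧ (N : ℤ) = 5 * x ^ 2 + 5 * y ^ 2 + 3 * z ^ 2 := by
  obtain ⟨a, b, z, h⟩ := exists_eq_sq_add_sq_add_three_mul_sq h3
  obtain ⟨a, b, z, ha, hb, hz, h⟩ := exists_odd_eq_sq_add_sq_add_three_mul_sq (by omega) h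
  obtain ⟨a, b, z, hz, hz5, h⟩ :=
    exists_sq_eq_two_mul_mod_five (by exact_mod_cast h5) ha hb hz h
  have hdvd : (1 ^ 2 + 2 ^ 2 : ℤ) ∣ a ^ 2 + b ^ 2 := by
    refine (ZMod.intCast_zmod_eq_zero_iff_dvd _ 5).mp ?_
    have hN : (N : ZMod 5) = a ^ 2 + b ^ 2 + 3 * z ^ 2 := by exact_mod_cast congrArg Int.cast h
    have five : (5 : ZMod 5) = 0 := rfl
    push_cast at hz5 ⊢
    linear_combination -hN - 3 * hz5 - N * five
  obtain ⟨x, y, hxy⟩ := exists_eq_mul_sq_add_sq_of_dvd (by norm_num) hdvd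
  exact ⟨x, y, z, hz, by linear_combination h + hxy⟩

theorem rep_120n_add_77 (n : ℕ) :
    ∃ x y z : ℤ, Odd z ∧ 120 * (n : ℤ) + 77 = 5 * x ^ 2 + 5 * y ^ 2 + 3 * z ^ 2 := by
  have h5 : ((120 * n + 77 : ℕ) : ZMod 5) = 2 := by
    push_cast
    reduce_mod_char
  exact_mod_cast rep_120n_add_77_general (N := 120 * n + 77) (by omega) (by omega)
    (h5 ▸ by decide)
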